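/- Fix real numbers λ₁ > λ₂ > λ₃ > λ₄ with λᵢ+λⱼ > 0 for all i ≠ j, let ε ∈ {+1,−1}, let (a₁,a₂,a₃) ∈ ℝ³, and let q = (a₁/(λ₁+λ₄), a₂/(λ₂+λ₄), a₃/(λ₃+λ₄), ε a₁/(λ₂+λ₃), ε a₂/(λ₁+λ₃), ε a₃/(λ₁+λ₂)) ∈ s_ε be the corresponding equilibrium of the SO(4) free rigid body vector field F. Then the characteristic polynomial of the 6×6 Jacobian matrix DF(q) equals t⁴(t² + K) with K = (k₁a₁² + k₂a₂² + k₃a₃²)/k₄, where k₄ = [(λ₁+λ₂)(λ₁+λ₃)(λ₁+λ₄)(λ₂+λ₃)(λ₂+λ₄)(λ₃+λ₄)]² > 0, k₁ = 4(λ₃+λ₄)(λ₂+λ₄)(λ₁+λ₃)(λ₁+λ₂)(λ₁λ₄−λ₂λ₃)² ≥ 0, k₂ = 4(λ₃+λ₄)(λ₂+λ₃)(λ₁+λ₄)(λ₁+λ₂)(λ₁λ₃−λ₂λ₄)² > 0 if λ₁λ₃ ≠ λ₂λ₄, k₃ = 4(λ₂+λ₄)(λ₂+λ₃)(λ₁+λ₄)(λ₁+λ₃)(λ₁λ₂−λ₃λ₄)²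 > 0; in particular K ≥ 0 and every eigenvalue of DF(q) is either 0 or purely imaginary. -/

import Mathlib

/-!
The subspace `s_ε` is the graph of a diagonal map `S = diag(s₁,s₂,s₃)` from the `x`-space to the
`y`-space, and since it consists of equilibria it lies in the kernel of `DF(q)`. Hence `DF(q)` factors
through `ℝ⁶ → ℝ³, (x,y) ↦ y - S x`, and swapping the two factors shows that its characteristic
polynomial is `t³` times that of the `3 × 3` matrix `D = DF₂₂ - S DF₁₂`, in terms of the `3 × 3` blocks
of `DF(q)` (`charpoly_of_kernel_graph`). The entries of `D` simplify to single fractions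
(`reduced_block`): `D` has zero diagonal, its `(i,j)` and `(j,i)` entries are multiples of the same `aₖ`
with opposite signs, and its two cyclic products cancel. Hence the characteristic polynomial of `D` is
`t³ + K t`. Since `K ≥ 0`, a root `z` of `t⁴ (t² + K)` satisfies `z = 0` or `z² = -K ≤ 0`.
-/

open Polynomial

/-- The SO(4) free rigid body vector field on `ℝ⁶`, in coordinates
`(x₁,x₂,x₃,y₁,y₂,y₃) = (p 0, p 1, p 2, p 3, p 4, p 5)`. -/
noncomputable def rbF (l1 l2 l3 l4 : ℝ) (p : Fin 6 → ℝ) : Fin 6 → ℝ :=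
  ![(1/(l1+l2) - 1/(l1+l3)) * (p 1 * p 2) + (1/(l3+l4) - 1/(l2+l4)) * (p 4 * p 5),
    (1/(l2+l3) - 1/(l1+l2)) * (p 0 * p 2) + (1/(l1+l4) - 1/(l3+l4)) * (p 3 * p 5),
    (1/(l1+l3) - 1/(l2+l3)) * (p 0 * p 1) + (1/(l2+l4) - 1/(l1+l4)) * (p 3 * p 4),
    (1/(l3+l4) - 1/(l1+l3)) * (p 1 * p 5) + (1/(l1+l2) - 1/(l2+l4)) * (p 2 * p 4),
    (1/(l2+l3) - 1/(l3+l4)) * (p 0 * p 5) + (1/(l1+l4) - 1/(l1+l2)) * (p 2 * p 3),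
    (1/(l2+l4) - 1/(l2+l3)) * (p 0 * p 4) + (1/(l1+l3) - 1/(l1+l4)) * (p 1 * p 3)]

/-- The point of `s₊` (`ε = 1`) or `s₋` (`ε = -1`) with parameters `(a₁,a₂,a₃)`. -/
noncomputable def sPoint (l1 l2 l3 l4 ε a₁ a₂ a₃ : ℝ) : Fin 6 → ℝ :=
  ![a₁/(l1+l4), a₂/(l2+l4), a₃/(l3+l4),
    ε * a₁/(l2+l3), ε * a₂/(l1+l3), ε * a₃/(l1+l2)]

/-- The Jacobian matrix of the SO(4) free rigid body vector field at `p`. -/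
noncomputable def JacF (l1 l2 l3 l4 : ℝ) (p : Fin 6 → ℝ) :
    Matrix (Fin 6) (Fin 6) ℝ :=
  Matrix.of fun i j => fderiv ℝ (fun q => rbF l1 l2 l3 l4 q i) p (Pi.single j 1)

/-- Directional derivative along a basis vector of the shape shared by all components of `rbF`. -/
lemma fderiv_quadratic (α β : ℝ) (a b c d j : Fin 6) (p : Fin 6 → ℝ) :
    fderiv ℝ (fun q : Fin 6 → ℝ => α * (q a * q b) + β * (q c * q d)) p (Pi.single j 1) =
      α * (p a * (Pi.single j 1 : Fin 6 → ℝ) b + (Pi.single j 1 : Fin 6 → ℝ) a * p b) +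
      β * (p c * (Pi.single j 1 : Fin 6 → ℝ) d + (Pi.single j 1 : Fin 6 → ℝ) c * p d) := by
  have h (i : Fin 6) : HasFDerivAt (fun q : Fin 6 → ℝ => q i)
      (ContinuousLinearMap.proj (R := ℝ) (φ := fun _ : Fin 6 => ℝ) i) p := hasFDerivAt_apply i p
  have H := (((h a).mul (h b)).const_mul α).add (((h c).mul (h d)).const_mul β)
  have e := H.fderiv
  change fderiv ℝ (fun q : Fin 6 → ℝ => α * (q a * q b) + β * (q c * q d)) p = _ at e
  rw [e]
  simp
  ring

lemma JacF_eq (l1 l2 l3 l4 : ℝ) (p : Fin 6 → ℝ) :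
    JacF l1 l2 l3 l4 p =
      !![0, (1/(l1+l2) - 1/(l1+l3)) * p 2, (1/(l1+l2) - 1/(l1+l3)) * p 1,
          0, (1/(l3+l4) - 1/(l2+l4)) * p 5, (1/(l3+l4) - 1/(l2+l4)) * p 4;
        (1/(l2+l3) - 1/(l1+l2)) * p 2, 0, (1/(l2+l3) - 1/(l1+l2)) * p 0,
          (1/(l1+l4) - 1/(l3+l4)) * p 5, 0, (1/(l1+l4) - 1/(l3+l4)) * p 3;
        (1/(l1+l3) - 1/(l2+l3)) * p 1, (1/(l1+l3) - 1/(l2+l3)) * p 0, 0,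
          (1/(l2+l4) - 1/(l1+l4)) * p 4, (1/(l2+l4) - 1/(l1+l4)) * p 3, 0;
        0, (1/(l3+l4) - 1/(l1+l3)) * p 5, (1/(l1+l2) - 1/(l2+l4)) * p 4,
          0, (1/(l1+l2) - 1/(l2+l4)) * p 2, (1/(l3+l4) - 1/(l1+l3)) * p 1;
        (1/(l2+l3) - 1/(l3+l4)) * p 5, 0, (1/(l1+l4) - 1/(l1+l2)) * p 3,
          (1/(l1+l4) - 1/(l1+l2)) * p 2, 0, (1/(l2+l3) - 1/(l3+l4)) * p 0;
        (1/(l2+l4) - 1/(l2+l3)) * p 4, (1/(l1+l3) - 1/(l1+l4)) * p 3, 0,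
          (1/(l1+l3) - 1/(l1+l4)) * p 1, (1/(l2+l4) - 1/(l2+l3)) * p 0, 0] := by
  ext i j
  fin_cases i <;>
    simp only [JacF, rbF, Matrix.of_apply, Fin.zero_eta, Fin.mk_one, Fin.reduceFinMk,
      Matrix.cons_val, fderiv_quadratic] <;>
    fin_cases j <;> simp

/-- If the graph of `diag(s₁,s₂,s₃)` lies in the kernel of `J`, then the characteristic polynomial of
`J` is `X³` times that of the lower right block minus `diag(s₁,s₂,s₃)` times the upper right block. -/
lemma charpoly_of_kernel_graph (J : Matrix (Fin 6) (Fin 6) ℝ) (s₁ s₂ s₃ : ℝ)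
    (hJ : ∀ i, J i 0 = -(J i 3 * s₁) ∧ J i 1 = -(J i 4 * s₂) ∧ J i 2 = -(J i 5 * s₃)) :
    J.charpoly = X ^ 3 *
      (!![J 3 3 - s₁ * J 0 3, J 3 4 - s₁ * J 0 4, J 3 5 - s₁ * J 0 5;
          J 4 3 - s₂ * J 1 3, J 4 4 - s₂ * J 1 4, J 4 5 - s₂ * J 1 5;
          J 5 3 - s₃ * J 2 3, J 5 4 - s₃ * J 2 4, J 5 5 - s₃ * J 2 5] :
        Matrix (Fin 3) (Fin 3) ℝ).charpoly := by
  let A : Matrix (Fin 6) (Fin 3) ℝ := Matrix.of fun i => ![J i 3, J i 4, J i 5]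
  let R : Matrix (Fin 3) (Fin 6) ℝ :=
    !![-s₁, 0, 0, 1, 0, 0; 0, -s₂, 0, 0, 1, 0; 0, 0, -s₃, 0, 0, 1]
  have hfac : J = A * R := by
    ext i j
    obtain ⟨h0, h1, h2⟩ := hJ i
    fin_cases j <;> simp [A, R, Matrix.mul_apply, Fin.sum_univ_three, h0, h1, h2]
  have hcomm := Matrix.charpoly_mul_comm_of_le A R (by simp)
  rw [← hfac] at hcomm
  rw [hcomm]
  congr 2
  ext i j
  fin_cases i <;> fin_cases j <;>
    simp [A, R, Matrix.mul_apply, Fin.sum_univ_succ] <;> ring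

lemma charpoly_zero_diag (u v w uT vT wT : ℝ) :
    (!![0, u, v; uT, 0, w; vT, wT, 0] : Matrix (Fin 3) (Fin 3) ℝ).charpoly =
      X ^ 3 - C (u * uT + v * vT + w * wT) * X - C (u * w * vT + v * uT * wT) := by
  simp [Matrix.charpoly, Matrix.det_fin_three]
  ring

/-- Tangent vectors of `s_ε`, the graph of the slopes `sᵢ` below, are killed by the Jacobian. -/
lemma sPoint_kernel (l1 l2 l3 l4 : ℝ)
    (hp12 : 0 < l1 + l2) (hp13 : 0 < l1 + l3) (hp14 : 0 < l1 + l4)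
    (hp23 : 0 < l2 + l3) (hp24 : 0 < l2 + l4) (hp34 : 0 < l3 + l4)
    (ε : ℝ) (hε : ε = 1 ∨ ε = -1) (a₁ a₂ a₃ : ℝ) (i : Fin 6) :
    let J := JacF l1 l2 l3 l4 (sPoint l1 l2 l3 l4 ε a₁ a₂ a₃)
    J i 0 = -(J i 3 * (ε * (l1+l4)/(l2+l3))) ∧ J i 1 = -(J i 4 * (ε * (l2+l4)/(l1+l3))) ∧
      J i 2 = -(J i 5 * (ε * (l3+l4)/(l1+l2))) := by
  intro J
  rcases hε with rfl | rfl <;> fin_cases i <;> refine ⟨?_, ?_, ?_⟩ <;>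
    simp [J, JacF_eq, sPoint] <;> field_simp <;> ring

lemma reduced_block (l1 l2 l3 l4 : ℝ)
    (hp12 : 0 < l1 + l2) (hp13 : 0 < l1 + l3) (hp14 : 0 < l1 + l4)
    (hp23 : 0 < l2 + l3) (hp24 : 0 < l2 + l4) (hp34 : 0 < l3 + l4)
    (ε : ℝ) (hε : ε = 1 ∨ ε = -1) (a₁ a₂ a₃ : ℝ) :
    let J := JacF l1 l2 l3 l4 (sPoint l1 l2 l3 l4 ε a₁ a₂ a₃)
    let s₁ := ε * (l1+l4)/(l2+l3)
    let s₂ := ε * (l2+l4)/(l1+l3)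
    let s₃ := ε * (l3+l4)/(l1+l2)
    (!![J 3 3 - s₁ * J 0 3, J 3 4 - s₁ * J 0 4, J 3 5 - s₁ * J 0 5;
        J 4 3 - s₂ * J 1 3, J 4 4 - s₂ * J 1 4, J 4 5 - s₂ * J 1 5;
        J 5 3 - s₃ * J 2 3, J 5 4 - s₃ * J 2 4, J 5 5 - s₃ * J 2 5] :
      Matrix (Fin 3) (Fin 3) ℝ) =
      !![0, -(2 * a₃ * (l1*l2 - l3*l4) / ((l1+l2)*(l3+l4)*(l2+l4)*(l2+l3))),
          2 * a₂ * (l1*l3 - l2*l4) / ((l1+l3)*(l2+l4)*(l3+l4)*(l2+l3));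
        2 * a₃ * (l1*l2 - l3*l4) / ((l1+l2)*(l3+l4)*(l1+l4)*(l1+l3)), 0,
          2 * a₁ * (l1*l4 - l2*l3) / ((l1+l4)*(l2+l3)*(l3+l4)*(l1+l3));
        -(2 * a₂ * (l1*l3 - l2*l4) / ((l1+l3)*(l2+l4)*(l1+l4)*(l1+l2))),
          -(2 * a₁ * (l1*l4 - l2*l3) / ((l1+l4)*(l2+l3)*(l2+l4)*(l1+l2))), 0] := by
  intro J s₁ s₂ s₃
  ext i j
  rcases hε with rfl | rfl <;> fin_cases i <;> fin_cases j <;>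
    simp [J, s₁, s₂, s₃, JacF_eq, sPoint] <;> field_simp <;> ring

lemma charpoly_reduced_block (l1 l2 l3 l4 : ℝ)
    (hp12 : 0 < l1 + l2) (hp13 : 0 < l1 + l3) (hp14 : 0 < l1 + l4)
    (hp23 : 0 < l2 + l3) (hp24 : 0 < l2 + l4) (hp34 : 0 < l3 + l4) (a₁ a₂ a₃ : ℝ) :
    (!![0, -(2 * a₃ * (l1*l2 - l3*l4) / ((l1+l2)*(l3+l4)*(l2+l4)*(l2+l3))),
          2 * a₂ * (l1*l3 - l2*l4) / ((l1+l3)*(l2+l4)*(l3+l4)*(l2+l3));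
        2 * a₃ * (l1*l2 - l3*l4) / ((l1+l2)*(l3+l4)*(l1+l4)*(l1+l3)), 0,
          2 * a₁ * (l1*l4 - l2*l3) / ((l1+l4)*(l2+l3)*(l3+l4)*(l1+l3));
        -(2 * a₂ * (l1*l3 - l2*l4) / ((l1+l3)*(l2+l4)*(l1+l4)*(l1+l2))),
          -(2 * a₁ * (l1*l4 - l2*l3) / ((l1+l4)*(l2+l3)*(l2+l4)*(l1+l2))), 0] :
      Matrix (Fin 3) (Fin 3) ℝ).charpoly =
    X * (X ^ 2 + C ((4*(l3+l4)*(l2+l4)*(l1+l3)*(l1+l2)*(l1*l4 - l2*l3)^2*a₁^2 +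
      4*(l3+l4)*(l2+l3)*(l1+l4)*(l1+l2)*(l1*l3 - l2*l4)^2*a₂^2 +
      4*(l2+l4)*(l2+l3)*(l1+l4)*(l1+l3)*(l1*l2 - l3*l4)^2*a₃^2) /
      ((l1+l2)*(l1+l3)*(l1+l4)*(l2+l3)*(l2+l4)*(l3+l4))^2)) := by
  rw [charpoly_zero_diag]
  have key (K m d : ℝ) (hm : m = -K) (hd : d = 0) :
      (X ^ 3 - C m * X - C d : ℝ[X]) = X * (X ^ 2 + C K) := by
    rw [hm, hd, map_neg, map_zero]
    ring
  apply key
  · field_simp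
    ring
  · field_simp
    ring

/-- at an equilibrium `q ∈ s_ε`, the characteristic polynomial
of the Jacobian `DF(q)` is `t⁴(t² + K)` with
`K = (k₁a₁² + k₂a₂² + k₃a₃²)/k₄ ≥ 0`, the stated signs of `k₁,…,k₄` hold, and
every complex eigenvalue of `DF(q)` is either `0` or purely imaginary. -/
theorem stmt18 (l1 l2 l3 l4 : ℝ)
    (h12 : l2 < l1) (h23 : l3 < l2) (h34 : l4 < l3)
    (hp12 : 0 < l1 + l2) (hp13 : 0 < l1 + l3) (hp14 : 0 < l1 + l4)
    (hp23 : 0 < l2 + l3) (hp24 : 0 < l2 + l4) (hp34 : 0 < l3 + l4)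
    (ε : ℝ) (hε : ε = 1 ∨ ε = -1) (a₁ a₂ a₃ : ℝ) :
    let k4 := ((l1+l2)*(l1+l3)*(l1+l4)*(l2+l3)*(l2+l4)*(l3+l4))^2
    let k1 := 4*(l3+l4)*(l2+l4)*(l1+l3)*(l1+l2)*(l1*l4 - l2*l3)^2
    let k2 := 4*(l3+l4)*(l2+l3)*(l1+l4)*(l1+l2)*(l1*l3 - l2*l4)^2
    let k3 := 4*(l2+l4)*(l2+l3)*(l1+l4)*(l1+l3)*(l1*l2 - l3*l4)^2
    let K := (k1*a₁^2 + k2*a₂^2 + k3*a₃^2) / k4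
    let J := JacF l1 l2 l3 l4 (sPoint l1 l2 l3 l4 ε a₁ a₂ a₃)
    J.charpoly = X^4 * (X^2 + C K) ∧
    0 < k4 ∧ 0 ≤ k1 ∧ (l1*l3 ≠ l2*l4 → 0 < k2) ∧ 0 < k3 ∧ 0 ≤ K ∧
    ∀ z : ℂ, (J.map Complex.ofReal).charpoly.IsRoot z → z.re = 0 := by
  intro k4 k1 k2 k3 K J
  have hk4 : 0 < k4 := by positivity
  have hk1 : 0 ≤ k1 := by positivity
  have hk2 : 0 ≤ k2 := by positivity
  have hk3 : 0 < k3 := by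
    have : 0 < l1*l2 - l3*l4 := by nlinarith
    positivity
  have hK : 0 ≤ K := by positivity
  have hchar : J.charpoly = X^4 * (X^2 + C K) := by
    rw [charpoly_of_kernel_graph J _ _ _
        (sPoint_kernel l1 l2 l3 l4 hp12 hp13 hp14 hp23 hp24 hp34 ε hε a₁ a₂ a₃),
      reduced_block l1 l2 l3 l4 hp12 hp13 hp14 hp23 hp24 hp34 ε hε a₁ a₂ a₃,
      charpoly_reduced_block l1 l2 l3 l4 hp12 hp13 hp14 hp23 hp24 hp34 a₁ a₂ a₃]
    ring
  refine ⟨hchar, hk4, hk1, fun hne => ?_, hk3, hK, fun z hz => ?_⟩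
  · have : l1*l3 - l2*l4 ≠ 0 := sub_ne_zero.mpr hne
    positivity
  · have hmap : (J.map Complex.ofReal).charpoly = J.charpoly.map Complex.ofRealHom :=
      Matrix.charpoly_map J Complex.ofRealHom
    rw [hmap, hchar] at hz
    simp only [IsRoot.def, Polynomial.map_mul, Polynomial.map_pow, Polynomial.map_add, map_X, map_C,
      eval_mul, eval_pow, eval_add, eval_X, eval_C, Complex.ofRealHom_eq_coe, mul_eq_zero] at hz
    rcases hz with hz | hz
    · simp [pow_eq_zero_iff (four_ne_zero) |>.mp hz]
    · have hre := congrArg Complex.re hz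
      have him := congrArg Complex.im hz
      simp [pow_two] at hre him
      -- `2 re z im z = 0`, and `im z = 0` would give `(re z)² = -K ≤ 0`.
      have hprod : z.re * z.im = 0 := by linarith
      rcases mul_eq_zero.mp hprod with h | h
      · exact h
      · rw [h] at hre
        exact mul_self_eq_zero.mp (le_antisymm (by linarith) (mul_self_nonneg _))
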